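/- arXiv:1310.1059 — 8 statements merged into one kernel-verified Lean document; each statement's English description precedes it below -/
import Mathlib

section
/- Let A be an invertible N×N real matrix, G an N×m real matrix, and D an m×N real matrix such that DG and S := −D·A⁻¹·G are invertible. Let M := fromBlocks(A, G; −D, 0) and let P̃₁⁻¹ := fromBlocks(I, G·(DG)⁻¹; 0, S⁻¹) · fromBlocks(I, 0; −D, −I) · fromBlocks(A⁻¹, 0; 0, I). Then P̃₁⁻¹·M = fromBlocks(I, (I − G·(DG)⁻¹·D)·A⁻¹·G; 0, I), and consequently (P̃₁⁻¹·M − 1)² = 0, i.e. the minimal polynomial of the preconditioned matrix P̃₁⁻¹·M divides (λ−1)². -/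
open Matrix

/-!
Since `A⁻¹ * A = 1`, multiplying `M` on the left by the two rightmost factors of `P₁inv` is a block
elimination, giving `fromBlocks 1 (A⁻¹ * G) 0 S` with `S = -(D * A⁻¹ * G)`. The leftmost factor
then normalises the lower right block to `S⁻¹ * S = 1` and turns the upper right block into
`A⁻¹ * G + G * (D * G)⁻¹ * S = (1 - G * (D * G)⁻¹ * D) * A⁻¹ * G`. Subtracting the identity leaves
a strictly block upper triangular matrix, whose square vanishes.
-/

/-- For the projection-method preconditioner built from the exact inverse of the
Schur complement `S = -D * A⁻¹ * G`, the preconditioned matrix `P̃₁⁻¹ * M` is block upper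
triangular with identity diagonal blocks, and its minimal polynomial divides `(λ - 1)²`. -/
theorem stmt_0 {N m : ℕ} (A : Matrix (Fin N) (Fin N) ℝ) (G : Matrix (Fin N) (Fin m) ℝ)
    (D : Matrix (Fin m) (Fin N) ℝ)
    (hA : IsUnit A.det) (hDG : IsUnit (D * G).det) (hS : IsUnit (-(D * A⁻¹ * G)).det)
    (M : Matrix ((Fin N) ⊕ (Fin m)) ((Fin N) ⊕ (Fin m)) ℝ)
    (hM : M = Matrix.fromBlocks A G (-D) 0)
    (P₁inv : Matrix ((Fin N) ⊕ (Fin m)) ((Fin N) ⊕ (Fin m)) ℝ)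
    (hP : P₁inv =
      Matrix.fromBlocks 1 (G * (D * G)⁻¹) 0 (-(D * A⁻¹ * G))⁻¹ *
      Matrix.fromBlocks 1 0 (-D) (-1) *
      Matrix.fromBlocks A⁻¹ 0 0 1) :
    P₁inv * M = Matrix.fromBlocks 1 ((1 - G * (D * G)⁻¹ * D) * A⁻¹ * G) 0 1 ∧
      (P₁inv * M - 1) ^ 2 = 0 := by
  have h₁ : Matrix.fromBlocks A⁻¹ 0 0 1 * M = Matrix.fromBlocks 1 (A⁻¹ * G) (-D) 0 := by
    rw [hM, fromBlocks_multiply]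
    simp [Matrix.nonsing_inv_mul A hA]
  have h₂ : Matrix.fromBlocks 1 0 (-D) (-1) * Matrix.fromBlocks 1 (A⁻¹ * G) (-D) 0 =
      Matrix.fromBlocks 1 (A⁻¹ * G) 0 (-(D * A⁻¹ * G)) := by
    rw [fromBlocks_multiply]
    simp [Matrix.mul_assoc]
  have key : P₁inv * M =
      Matrix.fromBlocks 1 ((1 - G * (D * G)⁻¹ * D) * A⁻¹ * G) 0 1 := by
    rw [hP, Matrix.mul_assoc, h₁, Matrix.mul_assoc, h₂, fromBlocks_multiply,
      Matrix.nonsing_inv_mul _ hS]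
    simp [Matrix.mul_assoc, Matrix.add_mul, sub_eq_add_neg]
  refine ⟨key, ?_⟩
  rw [key, ← fromBlocks_one, sub_eq_add_neg, fromBlocks_neg, fromBlocks_add, pow_two, fromBlocks_multiply]
  simp
end

section
/- Let A be an invertible N×N real matrix, G an N×m real matrix, D an m×N real matrix with DG invertible, and let W be any m×m real matrix. Let M := fromBlocks(A, G; −D, 0) and P⁻¹ := fromBlocks(I, G·(DG)⁻¹; 0, W) · fromBlocks(I, 0; −D, −I) · fromBlocks(A⁻¹, 0; 0, I). Then P⁻¹·M = fromBlocks(I, (I − G·(DG)⁻¹·D)·A⁻¹·G; 0, −W·D·A⁻¹·G); in particular the preconditioned matrix is block upper triangular with identity (1,1)-block, so its eigenvalues are 1 together with the eigenvalues of W·S where S := −D·A⁻¹·G. -/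
open Matrix Polynomial

/-- For the projection-method preconditioner built from an arbitrary approximate
inverse Schur complement `W`, the preconditioned matrix `P⁻¹ * M` is block upper triangular with
identity (1,1)-block and (2,2)-block `-W * D * A⁻¹ * G = W * S`; hence its eigenvalues are `1`
(with multiplicity `N`) together with the eigenvalues of `W * S`, where `S = -D * A⁻¹ * G`. -/
theorem stmt_1 {N m : ℕ} (A : Matrix (Fin N) (Fin N) ℝ) (G : Matrix (Fin N) (Fin m) ℝ)
    (D : Matrix (Fin m) (Fin N) ℝ) (W : Matrix (Fin m) (Fin m) ℝ)
    (hA : IsUnit A.det) (hDG : IsUnit (D * G).det)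
    (M : Matrix ((Fin N) ⊕ (Fin m)) ((Fin N) ⊕ (Fin m)) ℝ)
    (hM : M = Matrix.fromBlocks A G (-D) 0)
    (Pinv : Matrix ((Fin N) ⊕ (Fin m)) ((Fin N) ⊕ (Fin m)) ℝ)
    (hP : Pinv =
      Matrix.fromBlocks 1 (G * (D * G)⁻¹) 0 W *
      Matrix.fromBlocks 1 0 (-D) (-1) *
      Matrix.fromBlocks A⁻¹ 0 0 1) :
    Pinv * M =
      Matrix.fromBlocks 1 ((1 - G * (D * G)⁻¹ * D) * A⁻¹ * G) 0 (-(W * D * A⁻¹ * G)) ∧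
    (Pinv * M).charpoly = (X - 1) ^ N * (W * (-(D * A⁻¹ * G))).charpoly := by
  have key : Pinv * M =
      Matrix.fromBlocks 1 ((1 - G * (D * G)⁻¹ * D) * A⁻¹ * G) 0 (-(W * D * A⁻¹ * G)) := by
    -- Multiplying from the right keeps the factors sparse: `A⁻¹ * A = 1` appears first, and the
    -- middle factor then eliminates the `-D` block.
    rw [hP, hM, Matrix.mul_assoc, Matrix.mul_assoc, fromBlocks_multiply, fromBlocks_multiply,
      fromBlocks_multiply]
    simp [Matrix.nonsing_inv_mul A hA, Matrix.mul_assoc, Matrix.add_mul, sub_eq_add_neg]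
  refine ⟨key, ?_⟩
  rw [key, Matrix.charpoly_fromBlocks_zero₂₁, Matrix.charpoly_one, Fintype.card_fin]
  simp [Matrix.mul_assoc]
end

section
/- Let A be an invertible N×N real matrix, G an N×m real matrix, D an m×N real matrix, and W any m×m real matrix. Let M := fromBlocks(A, G; −D, 0) and P₃⁻¹ := fromBlocks(A⁻¹, 0; 0, I) · fromBlocks(I, −G; 0, I) · fromBlocks(I, 0; 0, −W). Then M·P₃⁻¹ = fromBlocks(I, 0; −D·A⁻¹, (−D·A⁻¹·G)·W), and consequently the characteristic polynomial of M·P₃⁻¹ equals (X−1)^N times the characteristic polynomial of (−D·A⁻¹·G)·W. -/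
open Matrix Polynomial

/-- For the block upper-triangular preconditioner `P₃⁻¹` built from an approximate
inverse Schur complement `W`, the right-preconditioned matrix `M * P₃⁻¹` is block lower
triangular with identity (1,1)-block and (2,2)-block `(-D * A⁻¹ * G) * W`; consequently its
characteristic polynomial equals `(X - 1)^N` times that of `(-D * A⁻¹ * G) * W`. -/
theorem stmt_2 {N m : ℕ} (A : Matrix (Fin N) (Fin N) ℝ) (G : Matrix (Fin N) (Fin m) ℝ)
    (D : Matrix (Fin m) (Fin N) ℝ) (W : Matrix (Fin m) (Fin m) ℝ)
    (hA : IsUnit A.det)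
    (M : Matrix ((Fin N) ⊕ (Fin m)) ((Fin N) ⊕ (Fin m)) ℝ)
    (hM : M = Matrix.fromBlocks A G (-D) 0)
    (P₃inv : Matrix ((Fin N) ⊕ (Fin m)) ((Fin N) ⊕ (Fin m)) ℝ)
    (hP : P₃inv =
      Matrix.fromBlocks A⁻¹ 0 0 1 *
      Matrix.fromBlocks 1 (-G) 0 1 *
      Matrix.fromBlocks 1 0 0 (-W)) :
    M * P₃inv = Matrix.fromBlocks 1 0 (-(D * A⁻¹)) ((-(D * A⁻¹ * G)) * W) ∧
    (M * P₃inv).charpoly = (X - 1) ^ N * ((-(D * A⁻¹ * G)) * W).charpoly := by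
  have hinv : A * A⁻¹ = 1 := Matrix.mul_nonsing_inv A hA
  have hprod : M * P₃inv =
      Matrix.fromBlocks 1 0 (-(D * A⁻¹)) ((-(D * A⁻¹ * G)) * W) := by
    subst hM hP
    -- The (1,2)-block is `A * A⁻¹ * G * W - G * W`, which vanishes since `A * A⁻¹ = 1`.
    have hcancel : A * (A⁻¹ * (G * W)) = G * W := by
      rw [← Matrix.mul_assoc, hinv, Matrix.one_mul]
    simp [Matrix.fromBlocks_multiply, Matrix.mul_assoc, hinv, hcancel]
  refine ⟨hprod, ?_⟩
  -- The product is block lower triangular, so its characteristic polynomial is the product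
  -- of those of the diagonal blocks.
  rw [hprod, Matrix.charpoly_fromBlocks_zero₁₂, Matrix.charpoly_one, Fintype.card_fin]
end

section
/- Let n ≥ 2 and let T_D, T_E, B_D, −L, G be the Dirichlet MAC matrices. Then −L − G·Gᵀ = fromBlocks(T_E ⊗ I_{n−1}, −(B_D ⊗ B_Dᵀ); −(B_Dᵀ ⊗ B_D), I_{n−1} ⊗ T_E). -/
/-!
The columns of `BD n` are the differences `e_{i+1} - e_i` of consecutive standard basis vectors,
so their Gram matrix is `(BD n)ᵀ * BD n = TD n`. By the mixed product property of the Kronecker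
product, the diagonal blocks of `G * Gᵀ` are therefore `I ⊗ TD n` and `TD n ⊗ I`, which cancel
against the corresponding terms of `-L`, while the off-diagonal blocks are `BD n ⊗ (BD n)ᵀ` and
`(BD n)ᵀ ⊗ BD n`.
-/

open Matrix Kronecker

/-- `(n-1)×(n-1)` tridiagonal matrix with `2` on the diagonal and `-1` on the sub/super-diagonal. -/
noncomputable def TD (n : ℕ) : Matrix (Fin (n - 1)) (Fin (n - 1)) ℝ := fun i j =>
  if i = j then 2 else if (i : ℕ) + 1 = (j : ℕ) ∨ (j : ℕ) + 1 = (i : ℕ) then -1 else 0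

/-- `n×n` tridiagonal matrix with diagonal `(3,2,…,2,3)` and `-1` on the sub/super-diagonal. -/
noncomputable def TE (n : ℕ) : Matrix (Fin n) (Fin n) ℝ := fun i j =>
  if i = j then (if (i : ℕ) = 0 ∨ (i : ℕ) = n - 1 then 3 else 2)
  else if (i : ℕ) + 1 = (j : ℕ) ∨ (j : ℕ) + 1 = (i : ℕ) then -1 else 0

/-- `n×n` diagonal matrix `diag(1,0,…,0,1)`. -/
noncomputable def E0 (n : ℕ) : Matrix (Fin n) (Fin n) ℝ := fun i j =>
  if i = j ∧ ((i : ℕ) = 0 ∨ (i : ℕ) = n - 1) then 1 else 0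

/-- `n×(n-1)` bidiagonal matrix with `(B_D)_{i,i} = -1`, `(B_D)_{i+1,i} = 1`. -/
noncomputable def BD (n : ℕ) : Matrix (Fin n) (Fin (n - 1)) ℝ := fun i j =>
  if (i : ℕ) = (j : ℕ) then -1 else if (i : ℕ) = (j : ℕ) + 1 then 1 else 0

/-- Discrete negative vector Laplacian of the Dirichlet MAC discretization
(`h = 1`, `μ = 1`). -/
noncomputable def negL (n : ℕ) :
    Matrix ((Fin n × Fin (n - 1)) ⊕ (Fin (n - 1) × Fin n))
      ((Fin n × Fin (n - 1)) ⊕ (Fin (n - 1) × Fin n)) ℝ :=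
  Matrix.fromBlocks
    ((1 : Matrix (Fin n) (Fin n) ℝ) ⊗ₖ TD n + TE n ⊗ₖ (1 : Matrix (Fin (n - 1)) (Fin (n - 1)) ℝ))
    0 0
    ((1 : Matrix (Fin (n - 1)) (Fin (n - 1)) ℝ) ⊗ₖ TE n + TD n ⊗ₖ (1 : Matrix (Fin n) (Fin n) ℝ))

/-- Discrete gradient of the Dirichlet MAC discretization: `I_n ⊗ B_Dᵀ` stacked on top of
`B_Dᵀ ⊗ I_n`. -/
noncomputable def Gmac (n : ℕ) :
    Matrix ((Fin n × Fin (n - 1)) ⊕ (Fin (n - 1) × Fin n)) (Fin n × Fin n) ℝ :=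
  Matrix.fromRows ((1 : Matrix (Fin n) (Fin n) ℝ) ⊗ₖ (BD n)ᵀ)
    ((BD n)ᵀ ⊗ₖ (1 : Matrix (Fin n) (Fin n) ℝ))


/-- Column `i` of `BD n` is `e_{i+1} - e_i`. -/
lemma BD_apply_eq (n : ℕ) (k : Fin n) (i : Fin (n - 1)) :
    BD n k i = (if k = (⟨i + 1, by omega⟩ : Fin n) then 1 else 0)
      - (if k = (⟨i, by omega⟩ : Fin n) then 1 else 0) := by
  simp only [BD, Fin.ext_iff]
  split_ifs <;> first | omega | norm_num

lemma BD_transpose_mul_BD (n : ℕ) : (BD n)ᵀ * BD n = TD n := by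
  ext i j
  -- Expanding only the left factor collapses the sum to two entries of `BD n`.
  simp only [Matrix.mul_apply, Matrix.transpose_apply, BD_apply_eq n _ i, sub_mul, ite_mul,
    one_mul, zero_mul, Finset.sum_sub_distrib, Finset.sum_ite_eq',
    Finset.mem_univ, if_true]
  simp only [BD, TD, Fin.ext_iff]
  split_ifs <;> first | omega | norm_num

/-- the commutator-difference matrix `-L - G Gᵀ` of the Dirichlet MAC
discretization equals the discrete `curl rot` block matrix
`fromBlocks (T_E ⊗ I_{n-1}) (-(B_D ⊗ B_Dᵀ)) (-(B_Dᵀ ⊗ B_D)) (I_{n-1} ⊗ T_E)`. -/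
theorem stmt_6 (n : ℕ) (hn : 2 ≤ n) :
    negL n - Gmac n * (Gmac n)ᵀ =
      Matrix.fromBlocks
        (TE n ⊗ₖ (1 : Matrix (Fin (n - 1)) (Fin (n - 1)) ℝ))
        (-(BD n ⊗ₖ (BD n)ᵀ))
        (-((BD n)ᵀ ⊗ₖ BD n))
        ((1 : Matrix (Fin (n - 1)) (Fin (n - 1)) ℝ) ⊗ₖ TE n) := by
  rw [negL, Gmac, Matrix.transpose_fromRows, Matrix.fromRows_mul_fromCols,
    sub_eq_iff_eq_add, Matrix.fromBlocks_add]
  simp only [← Matrix.kroneckerMap_transpose, Matrix.transpose_one, Matrix.transpose_transpose,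
    ← Matrix.mul_kronecker_mul, BD_transpose_mul_BD, Matrix.one_mul, Matrix.mul_one, neg_add_cancel]
  rw [add_comm (1 ⊗ₖ TD n)]
end

section
/- Let n ≥ 2 and let −L, G be the Dirichlet MAC matrices. Then the symmetric 2n(n−1)×2n(n−1) matrix −L − G·Gᵀ is positive semidefinite; equivalently, ⟨G·Gᵀ·u, u⟩ ≤ ⟨(−L)·u, u⟩ for every u ∈ ℝ^{2n(n−1)}. -/
/-!
Writing `B` for `BD n`, direct computation gives `Bᵀ B = TD` and `B Bᵀ + 2 E0 = TE`. By the first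
identity, the `TD` terms of `negL n` are exactly the diagonal blocks of `G Gᵀ`, so
`negL n - G Gᵀ` has diagonal blocks `TE ⊗ I` and `I ⊗ TE` and off-diagonal blocks `-B ⊗ Bᵀ` and
`-Bᵀ ⊗ B`. By the second identity this matrix is
`Cᵀ C + 2 diag(E0 ⊗ I, I ⊗ E0)`, where `C = [Bᵀ ⊗ I, -I ⊗ Bᵀ]` is the discrete curl (`curl_defect`).
Both summands are positive semidefinite: the first is a Gram matrix, the second is diagonal
with nonnegative entries and records the tangential boundary condition.
-/

open Matrix Kronecker

lemma sum_fin_ite_val {m : ℕ} (a : ℕ) (f : Fin m → ℝ) :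
    (∑ k : Fin m, if (k : ℕ) = a then f k else 0) = if h : a < m then f ⟨a, h⟩ else 0 := by
  split_ifs with h
  · rw [Finset.sum_eq_single ⟨a, h⟩]
    · simp
    · intro b _ hb
      rw [if_neg fun h' => hb (Fin.ext h')]
    · simp
  · exact Finset.sum_eq_zero fun k _ => if_neg (by omega)

lemma BD_mul_BD_transpose (n : ℕ) (hn : 2 ≤ n) : BD n * (BD n)ᵀ + (2 : ℝ) • E0 n = TE n := by
  ext i j
  have hi := i.2
  have hj := j.2
  -- At `i = 0` the second indicator must vanish, whereas `k = i - 1` would hold for `k = 0` because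
  -- of truncated subtraction; the inner test excludes that case.
  have h : ∀ k : Fin (n - 1), BD n i k * BD n j k
      = (if (k : ℕ) = i then -BD n j k else 0)
        + (if (k : ℕ) = i - 1 then (if (i : ℕ) = 0 then 0 else BD n j k) else 0) := by
    intro k
    simp only [BD]
    split_ifs <;> first | omega | norm_num
  simp only [Matrix.add_apply, Matrix.smul_apply, mul_apply, transpose_apply, h, Finset.sum_add_distrib]
  rw [sum_fin_ite_val, sum_fin_ite_val]
  simp only [BD, TE, E0, Fin.ext_iff, smul_eq_mul]
  split_ifs <;> first | omega | norm_num

/-- The discrete curl: the row block `[B_Dᵀ ⊗ I, -I ⊗ B_Dᵀ]`, whose values live at the interior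
vertices of the grid. -/
noncomputable def curlMac (n : ℕ) :
    Matrix (Fin (n - 1) × Fin (n - 1)) ((Fin n × Fin (n - 1)) ⊕ (Fin (n - 1) × Fin n)) ℝ :=
  Matrix.fromCols ((BD n)ᵀ ⊗ₖ (1 : Matrix (Fin (n - 1)) (Fin (n - 1)) ℝ))
    (-((1 : Matrix (Fin (n - 1)) (Fin (n - 1)) ℝ) ⊗ₖ (BD n)ᵀ))

/-- The boundary part of the discrete vector Laplacian: the extra weight carried by
velocity components tangential to the nearest wall. -/
noncomputable def bdryMac (n : ℕ) :
    Matrix ((Fin n × Fin (n - 1)) ⊕ (Fin (n - 1) × Fin n))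
      ((Fin n × Fin (n - 1)) ⊕ (Fin (n - 1) × Fin n)) ℝ :=
  Matrix.fromBlocks (((2 : ℝ) • E0 n) ⊗ₖ (1 : Matrix (Fin (n - 1)) (Fin (n - 1)) ℝ)) 0 0
    ((1 : Matrix (Fin (n - 1)) (Fin (n - 1)) ℝ) ⊗ₖ ((2 : ℝ) • E0 n))

/-- The discrete analogue of `-Δ + grad div = curl rot`, up to the boundary term. -/
lemma curl_defect (n : ℕ) (hn : 2 ≤ n) :
    negL n - Gmac n * (Gmac n)ᵀ = (curlMac n)ᵀ * curlMac n + bdryMac n := by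
  simp only [negL, Gmac, curlMac, bdryMac, transpose_fromRows, transpose_fromCols,
    fromRows_mul_fromCols, ← kroneckerMap_transpose, transpose_neg, transpose_transpose,
    transpose_one, ← mul_kronecker_mul, Matrix.mul_neg, Matrix.neg_mul, neg_neg, Matrix.one_mul,
    Matrix.mul_one, BD_transpose_mul_BD, sub_eq_add_neg, fromBlocks_neg, fromBlocks_add,
    ← BD_mul_BD_transpose n hn, add_kronecker, kronecker_add]
  congr 1 <;> abel

lemma bdryMac_posSemidef (n : ℕ) : (bdryMac n).PosSemidef := by
  have hE : (2 : ℝ) • E0 n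
      = diagonal fun i : Fin n => if (i : ℕ) = 0 ∨ (i : ℕ) = n - 1 then (2 : ℝ) else 0 := by
    ext i j
    simp only [E0, Matrix.smul_apply, diagonal_apply, smul_eq_mul]
    split_ifs <;> simp_all
  rw [bdryMac, hE, ← diagonal_one, diagonal_kronecker_diagonal, diagonal_kronecker_diagonal,
    fromBlocks_diagonal]
  refine PosSemidef.diagonal fun i => ?_
  rcases i with i | i <;> simp only [Sum.elim_inl, Sum.elim_inr, Pi.zero_apply] <;>
    split_ifs <;> norm_num

/-- the commutator-difference matrix `-L - G Gᵀ` of the Dirichlet MAC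
discretization is symmetric positive semidefinite; equivalently
`⟨G Gᵀ u, u⟩ ≤ ⟨(-L) u, u⟩` for all `u`. -/
theorem stmt_7 (n : ℕ) (hn : 2 ≤ n) :
    (negL n - Gmac n * (Gmac n)ᵀ).PosSemidef ∧
    ∀ u : (Fin n × Fin (n - 1)) ⊕ (Fin (n - 1) × Fin n) → ℝ,
      (Gmac n * (Gmac n)ᵀ).mulVec u ⬝ᵥ u ≤ (negL n).mulVec u ⬝ᵥ u := by
  have h : (negL n - Gmac n * (Gmac n)ᵀ).PosSemidef := by
    rw [curl_defect n hn, ← conjTranspose_eq_transpose_of_trivial]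
    exact (posSemidef_conjTranspose_mul_self _).add (bdryMac_posSemidef n)
  refine ⟨h, fun u => ?_⟩
  have hu := h.dotProduct_mulVec_nonneg u
  rw [star_trivial, dotProduct_comm, sub_mulVec, sub_dotProduct] at hu
  exact sub_nonneg.mp hu
end

section
/- Let n ≥ 2 and let −L, G be the Dirichlet MAC matrices. A vector p ∈ ℝ^{n²} satisfies G·p = 0 if and only if p is a scalar multiple of the all-ones vector; consequently the kernel of the Schur complement S := Gᵀ·(−L)⁻¹·G is one-dimensional, spanned by the all-ones vector, i.e. the eigenvalue 0 of S has multiplicity exactly 1. -/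
/-! The proof rests on two facts about one-dimensional differences: `BDᵀ` is the forward
difference, so `BDᵀ q = 0` only for constant `q`, and `TD = BDᵀ * BD`, `TE = BD * BDᵀ + 2 * E0`.
The first fact, applied along rows and along columns, shows that the kernel of `Gmac` is the line
of constant vectors. By the second, `TE` is positive semidefinite, and `TD` is positive definite
because `BD` is injective; so both Kronecker sums in `negL`, hence `negL` and `(negL n)⁻¹`, are
positive definite. If `Gᵀ (-L)⁻¹ G p = 0`, then pairing with `p` gives
`⟨G p, (-L)⁻¹ G p⟩ = 0`, which forces `G p = 0`. -/

open Matrix Kronecker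

lemma BD_eq (n : ℕ) (k : Fin n) (j : Fin (n - 1)) :
    BD n k j = (if k = ⟨j + 1, by omega⟩ then 1 else 0) - (if k = ⟨j, by omega⟩ then 1 else 0) := by
  simp only [BD, Fin.ext_iff]
  split_ifs <;> first | omega | norm_num

/-- `BDᵀ` acts as the forward difference. -/
lemma sum_BD_mul (n : ℕ) (f : Fin n → ℝ) (j : Fin (n - 1)) :
    ∑ k, BD n k j * f k = f ⟨j + 1, by omega⟩ - f ⟨j, by omega⟩ := by
  simp [BD_eq, sub_mul, Finset.sum_sub_distrib]

lemma TD_eq (n : ℕ) : TD n = (BD n)ᵀ * BD n := by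
  ext i j
  simp only [Matrix.mul_apply, Matrix.transpose_apply]
  rw [sum_BD_mul]
  simp only [BD, TD, Fin.ext_iff]
  split_ifs <;> first | omega | norm_num

/-- The row sums of `BD` against `g`: the difference of `g` extended by zero at both ends. -/
lemma sum_mul_BD (n : ℕ) (g : Fin (n - 1) → ℝ) (i : Fin n) :
    ∑ j, BD n i j * g j = (if h : 1 ≤ (i : ℕ) then g ⟨i - 1, by omega⟩ else 0)
      - (if h : (i : ℕ) < n - 1 then g ⟨i, h⟩ else 0) := by
  simp only [BD_eq, sub_mul, Finset.sum_sub_distrib, ite_mul, one_mul, zero_mul]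
  congr 1
  · split_ifs with h
    · rw [Finset.sum_eq_single ⟨(i : ℕ) - 1, by omega⟩]
      · rw [if_pos]; ext; simp; omega
      · intro b _ hb
        rw [if_neg]
        rintro h'
        apply hb
        ext
        simp [h']
      · simp
    · refine Finset.sum_eq_zero fun b _ => if_neg fun h' => h ?_
      simp [h']
  · split_ifs with h
    · rw [Finset.sum_eq_single ⟨(i : ℕ), h⟩]
      · simp
      · intro b _ hb
        rw [if_neg]
        rintro h'
        apply hb
        ext
        simp [h']
      · simp
    · refine Finset.sum_eq_zero fun b _ => if_neg fun h' => h ?_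
      simp [h']

lemma TE_eq (n : ℕ) (hn : 2 ≤ n) : TE n = BD n * (BD n)ᵀ + (2 : ℝ) • E0 n := by
  ext i j
  simp only [Matrix.add_apply, Matrix.smul_apply, Matrix.mul_apply, Matrix.transpose_apply]
  rw [sum_mul_BD]
  simp only [BD, TE, E0, Fin.ext_iff, smul_eq_mul]
  split_ifs <;> first | omega | norm_num

lemma E0_posSemidef (n : ℕ) : (E0 n).PosSemidef := by
  have h : E0 n = Matrix.diagonal
      (fun i : Fin n => if (i : ℕ) = 0 ∨ (i : ℕ) = n - 1 then (1 : ℝ) else 0) := by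
    ext i j
    simp only [E0, Matrix.diagonal_apply]
    split_ifs <;> first | rfl | tauto
  rw [h]
  refine Matrix.PosSemidef.diagonal fun i => ?_
  dsimp only
  split_ifs <;> simp

lemma BD_injective (n : ℕ) : Function.Injective (BD n).mulVec := by
  rw [← Matrix.coe_mulVecLin, ← LinearMap.ker_eq_bot, LinearMap.ker_eq_bot']
  intro g hg
  -- The `i`-th row of `BD g = 0` reads `g (i - 1) = g i`, and the row `i = 0` reads `g 0 = 0`.
  have hrow : ∀ i : Fin n, ∑ j, BD n i j * g j = 0 := fun i => congrFun hg i
  have key : ∀ (k : ℕ) (hk : k < n - 1), g ⟨k, hk⟩ = 0 := by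
    intro k
    induction k with
    | zero =>
      intro hk
      have := hrow ⟨0, by omega⟩
      rw [sum_mul_BD] at this
      simpa [hk] using this
    | succ k ih =>
      intro hk
      have := hrow ⟨k + 1, by omega⟩
      rw [sum_mul_BD] at this
      simpa [hk, ih (by omega)] using this
  ext i
  exact key i i.2

lemma TD_posDef (n : ℕ) : (TD n).PosDef := by
  rw [TD_eq, ← Matrix.conjTranspose_eq_transpose_of_trivial]
  exact Matrix.PosDef.conjTranspose_mul_self _ (BD_injective n)

lemma TE_posSemidef (n : ℕ) (hn : 2 ≤ n) : (TE n).PosSemidef := by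
  rw [TE_eq n hn, ← Matrix.conjTranspose_eq_transpose_of_trivial]
  exact (Matrix.posSemidef_self_mul_conjTranspose _).add
    ((E0_posSemidef n).smul (by norm_num))

lemma posDef_fromBlocks_zero {ι κ : Type*} [Fintype ι] [Fintype κ]
    {A : Matrix ι ι ℝ} {D : Matrix κ κ ℝ} (hA : A.PosDef) (hD : D.PosDef) :
    (Matrix.fromBlocks A 0 0 D).PosDef := by
  refine Matrix.PosDef.of_dotProduct_mulVec_pos ?_ ?_
  · exact Matrix.IsHermitian.fromBlocks hA.1 (by simp) hD.1
  · intro x hx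
    obtain ⟨u, v, rfl⟩ : ∃ u v, x = Sum.elim u v := ⟨_, _, (Sum.elim_comp_inl_inr x).symm⟩
    have hsum : star (Sum.elim u v) ⬝ᵥ (Matrix.fromBlocks A 0 0 D) *ᵥ (Sum.elim u v)
        = star u ⬝ᵥ A *ᵥ u + star v ⬝ᵥ D *ᵥ v := by
      simp [Matrix.fromBlocks_mulVec, dotProduct]
    rw [hsum]
    by_cases hu : u = 0
    · have hv : v ≠ 0 := by
        rintro rfl
        apply hx
        subst hu
        ext (i | i) <;> rfl
      exact add_pos_of_nonneg_of_pos (hA.posSemidef.dotProduct_mulVec_nonneg u)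
        (hD.dotProduct_mulVec_pos hv)
    · exact add_pos_of_pos_of_nonneg (hA.dotProduct_mulVec_pos hu)
        (hD.posSemidef.dotProduct_mulVec_nonneg v)

lemma negL_posDef (n : ℕ) (hn : 2 ≤ n) : (negL n).PosDef :=
  posDef_fromBlocks_zero
    ((Matrix.PosDef.one.kronecker (TD_posDef n)).add_posSemidef
      ((TE_posSemidef n hn).kronecker Matrix.PosSemidef.one))
    (((TD_posDef n).kronecker Matrix.PosDef.one).posSemidef_add
      (Matrix.PosSemidef.one.kronecker (TE_posSemidef n hn)))

lemma Gmac_mulVec_inl (n : ℕ) (p : Fin n × Fin n → ℝ) (i : Fin n) (j : Fin (n - 1)) :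
    (Gmac n).mulVec p (Sum.inl (i, j)) = p (i, ⟨j + 1, by omega⟩) - p (i, ⟨j, by omega⟩) := by
  rw [← sum_BD_mul n (fun k => p (i, k)) j]
  simp [Gmac, Matrix.mulVec, dotProduct, Fintype.sum_prod_type, Matrix.one_apply]

lemma Gmac_mulVec_inr (n : ℕ) (p : Fin n × Fin n → ℝ) (i : Fin (n - 1)) (j : Fin n) :
    (Gmac n).mulVec p (Sum.inr (i, j)) = p (⟨i + 1, by omega⟩, j) - p (⟨i, by omega⟩, j) := by
  rw [← sum_BD_mul n (fun k => p (k, j)) i]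
  simp [Gmac, Matrix.mulVec, dotProduct, Fintype.sum_prod_type, Matrix.one_apply]

/-- A vector with vanishing forward differences is constant. -/
lemma eq_zero_entry (n : ℕ) (hn : 0 < n) (f : Fin n → ℝ)
    (h : ∀ j : Fin (n - 1), f ⟨j + 1, by omega⟩ - f ⟨j, by omega⟩ = 0) (i : Fin n) :
    f i = f ⟨0, hn⟩ := by
  obtain ⟨i, hi⟩ := i
  induction i with
  | zero => rfl
  | succ k ih =>
    rw [← ih (by omega)]
    exact sub_eq_zero.mp (h ⟨k, by omega⟩)

lemma Gmac_mulVec_eq_zero_iff (n : ℕ) (hn : 2 ≤ n) (p : Fin n × Fin n → ℝ) :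
    (Gmac n).mulVec p = 0 ↔ ∃ c : ℝ, p = fun _ => c := by
  constructor
  · intro h
    refine ⟨p (⟨0, by omega⟩, ⟨0, by omega⟩), ?_⟩
    ext ⟨i, j⟩
    rw [eq_zero_entry n (by omega) (fun k => p (i, k))
        (fun k => by rw [← Gmac_mulVec_inl, h]; rfl) j]
    exact eq_zero_entry n (by omega) (fun k => p (k, ⟨0, by omega⟩))
      (fun k => by rw [← Gmac_mulVec_inr, h]; rfl) i
  · rintro ⟨c, rfl⟩
    ext (⟨i, j⟩ | ⟨i, j⟩)
    · simp [Gmac_mulVec_inl]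
    · simp [Gmac_mulVec_inr]

/-- The Schur complement has the same kernel as the gradient, since `(negL n)⁻¹` is positive
definite. -/
lemma schur_mulVec_eq_zero_iff (n : ℕ) (hn : 2 ≤ n) (p : Fin n × Fin n → ℝ) :
    ((Gmac n)ᵀ * (negL n)⁻¹ * Gmac n).mulVec p = 0 ↔ (Gmac n).mulVec p = 0 := by
  constructor
  · intro h
    by_contra hne
    have hpos := (negL_posDef n hn).inv.dotProduct_mulVec_pos hne
    have hquad : star ((Gmac n).mulVec p) ⬝ᵥ (negL n)⁻¹ *ᵥ ((Gmac n).mulVec p)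
        = p ⬝ᵥ ((Gmac n)ᵀ * (negL n)⁻¹ * Gmac n).mulVec p := by
      rw [← Matrix.mulVec_mulVec, ← Matrix.mulVec_mulVec, Matrix.dotProduct_mulVec p,
        Matrix.vecMul_transpose, star_trivial]
    rw [hquad, h, dotProduct_zero] at hpos
    exact lt_irrefl _ hpos
  · intro h
    rw [← Matrix.mulVec_mulVec, h, Matrix.mulVec_zero]

/-- for the Dirichlet MAC discretization, `G p = 0` iff `p` is a constant
vector; consequently the kernel of the Schur complement `S = Gᵀ (-L)⁻¹ G` consists exactly
of the constant vectors and is one-dimensional, i.e. the eigenvalue `0` of `S` has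
multiplicity exactly `1`. -/
theorem stmt_9 (n : ℕ) (hn : 2 ≤ n) :
    (∀ p : Fin n × Fin n → ℝ,
        (Gmac n).mulVec p = 0 ↔ ∃ c : ℝ, p = fun _ => c) ∧
    (∀ p : Fin n × Fin n → ℝ,
        ((Gmac n)ᵀ * (negL n)⁻¹ * Gmac n).mulVec p = 0 ↔ ∃ c : ℝ, p = fun _ => c) ∧
    Module.finrank ℝ
        (LinearMap.ker ((Gmac n)ᵀ * (negL n)⁻¹ * Gmac n).mulVecLin) = 1 := by
  have hS : ∀ p : Fin n × Fin n → ℝ,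
      ((Gmac n)ᵀ * (negL n)⁻¹ * Gmac n).mulVec p = 0 ↔ ∃ c : ℝ, p = fun _ => c := fun p =>
    (schur_mulVec_eq_zero_iff n hn p).trans (Gmac_mulVec_eq_zero_iff n hn p)
  refine ⟨Gmac_mulVec_eq_zero_iff n hn, hS, ?_⟩
  have hker : LinearMap.ker ((Gmac n)ᵀ * (negL n)⁻¹ * Gmac n).mulVecLin
      = Submodule.span ℝ {(fun _ => 1 : Fin n × Fin n → ℝ)} := by
    ext p
    rw [LinearMap.mem_ker, Matrix.mulVecLin_apply, hS, Submodule.mem_span_singleton]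
    refine exists_congr fun c => ?_
    rw [eq_comm]
    simp [funext_iff]
  rw [hker]
  refine finrank_span_singleton fun h => ?_
  exact one_ne_zero (congrFun h (⟨0, by omega⟩, ⟨0, by omega⟩))
end

section
/- Let n ≥ 3 and let T_P, B_P, −L_P, G_P be the periodic MAC matrices. Then the discrete commutation property holds exactly: (−L_P)·G_P = G_P·(G_Pᵀ·G_P). -/
/-!
With `P` the cyclic permutation matrix, `B_P = 1 - P` and `T_P = 2 - P - Pᵀ`. Since `P` is
orthogonal, `B_P` is normal and `B_P B_Pᵀ = T_P = B_Pᵀ B_P`. The first equality shows that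
`G_PᵀG_P` is the scalar Laplacian `I ⊗ T_P + T_P ⊗ I`, that is, each diagonal block of `-L_P`;
the two together show that `T_P` commutes with `B_Pᵀ`, so this Laplacian commutes with both
blocks `I ⊗ B_Pᵀ` and `B_Pᵀ ⊗ I` of the gradient.
-/

open Matrix Kronecker

/-- `n×n` circulant tridiagonal matrix with `2` on the diagonal, `-1` on the sub/super-diagonal
and in the corners `(1,n)` and `(n,1)`. -/
noncomputable def TP (n : ℕ) : Matrix (Fin n) (Fin n) ℝ := fun i j =>
  if i = j then 2
  else if (i : ℕ) + 1 = (j : ℕ) ∨ (j : ℕ) + 1 = (i : ℕ) ∨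
      ((i : ℕ) = 0 ∧ (j : ℕ) = n - 1) ∨ ((i : ℕ) = n - 1 ∧ (j : ℕ) = 0) then -1 else 0

/-- `n×n` circulant matrix with `1` on the diagonal, `-1` on the super-diagonal and in the
corner `(n,1)`. -/
noncomputable def BP (n : ℕ) : Matrix (Fin n) (Fin n) ℝ := fun i j =>
  if i = j then 1
  else if (i : ℕ) + 1 = (j : ℕ) ∨ ((i : ℕ) = n - 1 ∧ (j : ℕ) = 0) then -1 else 0

/-- Discrete negative vector Laplacian of the periodic MAC discretization (`h = 1`, `μ = 1`). -/
noncomputable def negLP (n : ℕ) :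
    Matrix ((Fin n × Fin n) ⊕ (Fin n × Fin n)) ((Fin n × Fin n) ⊕ (Fin n × Fin n)) ℝ :=
  Matrix.fromBlocks
    ((1 : Matrix (Fin n) (Fin n) ℝ) ⊗ₖ TP n + TP n ⊗ₖ (1 : Matrix (Fin n) (Fin n) ℝ))
    0 0
    ((1 : Matrix (Fin n) (Fin n) ℝ) ⊗ₖ TP n + TP n ⊗ₖ (1 : Matrix (Fin n) (Fin n) ℝ))

/-- Discrete gradient of the periodic MAC discretization: `I_n ⊗ B_Pᵀ` stacked on top of
`B_Pᵀ ⊗ I_n`. -/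
noncomputable def GPmac (n : ℕ) :
    Matrix ((Fin n × Fin n) ⊕ (Fin n × Fin n)) (Fin n × Fin n) ℝ :=
  Matrix.fromRows ((1 : Matrix (Fin n) (Fin n) ℝ) ⊗ₖ (BP n)ᵀ)
    ((BP n)ᵀ ⊗ₖ (1 : Matrix (Fin n) (Fin n) ℝ))

theorem BP_eq (n : ℕ) (hn : 3 ≤ n) : BP n = 1 - (finRotate n).permMatrix ℝ := by
  obtain ⟨m, rfl⟩ : ∃ m, n = m + 1 := ⟨n - 1, by omega⟩
  ext i j
  have h := coe_finRotate (n := m) i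
  simp only [BP, Matrix.sub_apply, Matrix.one_apply, Equiv.Perm.permMatrix,
    PEquiv.toMatrix_apply, Equiv.toPEquiv_apply, Option.mem_def, Option.some.injEq, Fin.ext_iff,
    Fin.val_last] at h ⊢
  grind

theorem TP_eq (n : ℕ) (hn : 3 ≤ n) :
    TP n = 2 - (finRotate n).permMatrix ℝ - ((finRotate n).permMatrix ℝ)ᵀ := by
  obtain ⟨m, rfl⟩ : ∃ m, n = m + 1 := ⟨n - 1, by omega⟩
  ext i j
  have h := coe_finRotate (n := m) i
  have h' := coe_finRotate (n := m) j
  have h2 : (2 : Matrix (Fin (m + 1)) (Fin (m + 1)) ℝ) i j = if i = j then 2 else 0 := by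
    simp [Matrix.ofNat_apply]
  simp only [TP, h2, Matrix.sub_apply, Matrix.transpose_apply, Equiv.Perm.permMatrix,
    PEquiv.toMatrix_apply, Equiv.toPEquiv_apply, Option.mem_def, Option.some.injEq, Fin.ext_iff,
    Fin.val_last] at h h' ⊢
  grind

theorem BP_mul_transpose (n : ℕ) (hn : 3 ≤ n) : BP n * (BP n)ᵀ = TP n := by
  have h : (finRotate n).permMatrix ℝ * ((finRotate n).permMatrix ℝ)ᵀ = 1 := by
    rw [Matrix.transpose_permMatrix, ← Matrix.permMatrix_mul]
    simp
  rw [BP_eq n hn, TP_eq n hn, transpose_sub, transpose_one, sub_mul, mul_sub, mul_sub, h,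
    ← one_add_one_eq_two]
  simp only [one_mul, mul_one]
  abel

theorem transpose_BP_mul (n : ℕ) (hn : 3 ≤ n) : (BP n)ᵀ * BP n = TP n := by
  have h : ((finRotate n).permMatrix ℝ)ᵀ * (finRotate n).permMatrix ℝ = 1 := by
    rw [Matrix.transpose_permMatrix, ← Matrix.permMatrix_mul]
    simp
  rw [BP_eq n hn, TP_eq n hn, transpose_sub, transpose_one, sub_mul, mul_sub, mul_sub, h,
    ← one_add_one_eq_two]
  simp only [one_mul, mul_one]
  abel

/-- The discrete pressure Laplacian `GᵀG` is the diagonal block of the vector Laplacian. -/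
theorem transpose_GPmac_mul (n : ℕ) (hn : 3 ≤ n) :
    (GPmac n)ᵀ * GPmac n =
      (1 : Matrix (Fin n) (Fin n) ℝ) ⊗ₖ TP n + TP n ⊗ₖ (1 : Matrix (Fin n) (Fin n) ℝ) := by
  rw [GPmac, transpose_fromRows, fromCols_mul_fromRows]
  simp only [← kroneckerMap_transpose, transpose_one, transpose_transpose, ← mul_kronecker_mul,
    one_mul, BP_mul_transpose n hn]

/-- for purely periodic boundary conditions, the discrete commutation property
holds exactly: `(-L_P) G_P = G_P (G_Pᵀ G_P)`. -/
theorem stmt_14 (n : ℕ) (hn : 3 ≤ n) :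
    negLP n * GPmac n = GPmac n * ((GPmac n)ᵀ * GPmac n) := by
  have hc : TP n * (BP n)ᵀ = (BP n)ᵀ * TP n := by
    rw [← transpose_BP_mul n hn, Matrix.mul_assoc, BP_mul_transpose n hn, transpose_BP_mul n hn]
  rw [transpose_GPmac_mul n hn, negLP, GPmac, fromBlocks_mul_fromRows, fromRows_mul]
  simp only [Matrix.zero_mul, add_zero, zero_add, Matrix.add_mul, Matrix.mul_add,
    ← mul_kronecker_mul, Matrix.one_mul, Matrix.mul_one, hc]
end

section
/- Let G be an N×m real matrix and D an m×N real matrix with DG invertible, and set M := fromBlocks(I, G; −D, 0) (the saddle point matrix of the degenerate inviscid model, whose velocity block is the identity). Then: (i) fromBlocks(I, G·(DG)⁻¹; 0, −(DG)⁻¹) · fromBlocks(I, 0; −D, −I) · M = 1, i.e. the projection-method preconditioner P₁⁻¹ satisfies P₁⁻¹·M = I; and (ii) fromBlocks(I, 0; 0, (DG)⁻¹) · fromBlocks(I, 0; D, I) · M = fromBlocks(I, G; 0, I), so the block lower-triangular preconditioner P₂⁻¹ satisfies (P₂⁻¹·M − 1)² = 0. Both identities hold regardless of any boundary condition encoded in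 G and D. -/
/-! The lower triangular factor of each preconditioner carries out one step of block
elimination on `M`, turning it into a block upper triangular matrix whose lower right block is
the Schur complement `D * G` up to sign. The remaining factor inverts that matrix completely
for `P₁`, and only its block diagonal for `P₂`; in the second case what is left differs from
the identity by a strictly block upper triangular matrix, whose square vanishes. -/

open Matrix

/-- For the degenerate (inviscid) model whose velocity block is the identity,
the projection-method preconditioner `P₁⁻¹` satisfies `P₁⁻¹ * M = 1`, and the block
lower-triangular preconditioner `P₂⁻¹` satisfies `P₂⁻¹ * M = fromBlocks 1 G 0 1`, hence
`(P₂⁻¹ * M - 1)² = 0`.  No boundary-condition assumption on `G`, `D` is needed. -/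
theorem stmt_19 {N m : ℕ} (G : Matrix (Fin N) (Fin m) ℝ) (D : Matrix (Fin m) (Fin N) ℝ)
    (hDG : IsUnit (D * G).det)
    (M : Matrix ((Fin N) ⊕ (Fin m)) ((Fin N) ⊕ (Fin m)) ℝ)
    (hM : M = Matrix.fromBlocks 1 G (-D) 0) :
    (Matrix.fromBlocks 1 (G * (D * G)⁻¹) 0 (-(D * G)⁻¹) *
        Matrix.fromBlocks 1 0 (-D) (-1) * M = 1) ∧
    (Matrix.fromBlocks 1 0 0 (D * G)⁻¹ * Matrix.fromBlocks 1 0 D 1 * M =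
        Matrix.fromBlocks 1 G 0 1) ∧
    (Matrix.fromBlocks 1 0 0 (D * G)⁻¹ * Matrix.fromBlocks 1 0 D 1 * M - 1) ^ 2 = 0 := by
  subst hM
  have hS : (D * G)⁻¹ * (D * G) = 1 := Matrix.nonsing_inv_mul _ hDG
  -- Multiplying the two right-hand factors first eliminates the block `-D` of `M`,
  -- leaving a block upper triangular matrix with lower right block `∓ D * G`.
  have h₁ : Matrix.fromBlocks 1 0 (-D) (-1) * Matrix.fromBlocks 1 G (-D) 0 =
      Matrix.fromBlocks 1 G 0 (-(D * G)) := by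
    simp [Matrix.fromBlocks_multiply]
  have h₂ : Matrix.fromBlocks 1 0 D 1 * Matrix.fromBlocks 1 G (-D) 0 =
      Matrix.fromBlocks 1 G 0 (D * G) := by
    simp [Matrix.fromBlocks_multiply]
  have h₃ : Matrix.fromBlocks 1 0 0 (D * G)⁻¹ * Matrix.fromBlocks 1 0 D 1 *
      Matrix.fromBlocks 1 G (-D) 0 = Matrix.fromBlocks 1 G 0 1 := by
    rw [Matrix.mul_assoc, h₂, Matrix.fromBlocks_multiply]
    simp only [Matrix.one_mul, Matrix.zero_mul, Matrix.mul_zero, add_zero, zero_add, hS]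
  refine ⟨?_, h₃, ?_⟩
  · rw [Matrix.mul_assoc, h₁, Matrix.fromBlocks_multiply]
    simp only [Matrix.one_mul, Matrix.zero_mul, Matrix.mul_zero, add_zero, zero_add,
      Matrix.mul_neg, Matrix.neg_mul, neg_neg, Matrix.mul_assoc G, hS, Matrix.mul_one,
      add_neg_cancel, Matrix.fromBlocks_one]
  · rw [h₃]
    have h₄ : Matrix.fromBlocks 1 G 0 1 - 1 =
        Matrix.fromBlocks (0 : Matrix (Fin N) (Fin N) ℝ) G 0 (0 : Matrix (Fin m) (Fin m) ℝ) := by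
      rw [sub_eq_iff_eq_add, ← Matrix.fromBlocks_one, Matrix.fromBlocks_add]
      simp
    rw [h₄, sq, Matrix.fromBlocks_multiply]
    simp
end
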